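/- Specialize to the Wess–Zumino Poisson sigma model data: ρ^i_a := π^{ai} and θ_{ai} := δ_{ai} (Kronecker delta). Then θ*^k_b = g^{kb}, the matrices M = (g^{kb} − π^{kb}) and N = (g^{kb} + π^{kb}) are invertible at every point of U, and with T, φ, ω defined by the general formulas (for any choice of smooth Γ̂^a_{bi}), both gauge-invariance conditions hold at every point of U: (i) Σ_k ( ρ^k_a ∂_k g_{ij} + g_{kj} ∂_i ρ^k_a + g_{ik} ∂_j ρ^k_a ) = Σ_b ( ω^b_{ai} Σ_k ρ^k_b g_{kj} + ω^b_{aj} Σ_k ρ^k_b g_{ki} + φ^b_{ai} θ_{bj} + φ^b_{aj} θ_{bi} ), and (ii) Σ_k ρ^k_a H_{kij} = ∂_i θ_{aj} − ∂_j θ_{ai} − Σ_b ( ω^b_{ai} θ_{bj} − ω^b_{aj} θ_{bi} ) − Σ_{b,k} ( φ^b_{ai} ρ^k_b g_{kj} − φ^b_{aj} ρ^k_b g_{ki} ). In other words, the WZ-twisted Poisson sigma model with kinetic term admits coefficient functions ω, φ solving its gauge-invariance conditions. -/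

import Mathlib

/-!
Only two features of the data matter: `(ρ, θ)` frames a Dirac structure, which makes `M` and `N`
invertible, and `Γ` is the Levi-Civita connection. Write `R` and `S` for the matrices of `ρ` and
`θ*`, so that `M = S + R` and `N = S - R`. If `(S ± R) v = 0`, then `θ(v) = ∓ g(ρ(v), ·)`, and
isotropy of the Dirac structure gives `g(ρ(v), ρ(v)) = 0`, hence `v = 0`.

At a fixed gauge index `a` and form index `i`, the formulas for `T`, `φ`, `ω` are linear equations
which combine to

* `R ω + S φ = ∇_i ρ_a`,
* `S ω + R φ = ∇_i θ*_a - h_i`, with `h_i` the `H`-term,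

so `Γ̂` drops out. Lower the index with `g`. Symmetrizing the first identity gives
`L_v g = ∇_i v_j + ∇_j v_i` for `v = ρ_a`, which is condition (i). Antisymmetrizing the second gives
`(dθ_a)_{ij} = ∇_i θ_{aj} - ∇_j θ_{ai}`, and the `H`-terms add up to `ρ^k_a H_{kij}`, which is
condition (ii).
-/

/-- Partial derivative of a real-valued function on `ℝ^n` in the `i`-th coordinate
direction. -/
noncomputable def pd {n : ℕ} (f : (Fin n → ℝ) → ℝ) (i : Fin n) (x : Fin n → ℝ) : ℝ :=
  fderiv ℝ f x (Pi.single i 1)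

section LinearAlgebra

open Matrix

variable {m ι 𝕜 : Type*} [Fintype ι]

section Square

variable [Fintype m]

lemma posDef_of_sum_pos {A : m → m → ℝ} (hsymm : ∀ i j, A i j = A j i)
    (hpos : ∀ v : m → ℝ, v ≠ 0 → 0 < ∑ i, ∑ j, v i * A i j * v j) : (of A).PosDef := by
  refine .of_dotProduct_mulVec_pos (ext fun i j => hsymm j i) fun v hv => ?_
  simpa only [dotProduct, mulVec, Finset.mul_sum, mul_assoc, of_apply, star_trivial]
    using hpos v hv

lemma matrix_of_mul_of_eq_one [DecidableEq m] [NonAssocSemiring 𝕜] {A B : m → m → 𝕜}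
    (h : ∀ i j, (∑ k, A i k * B k j) = if i = j then 1 else 0) :
    of A * of B = 1 :=
  ext fun i j => by rw [one_apply, ← h]; rfl

lemma dotProduct_mulVec_self_of_transpose_eq_neg [CommRing 𝕜] [CharZero 𝕜] [NoZeroDivisors 𝕜]
    {A : Matrix m m 𝕜} (hA : Aᵀ = -A) (v : m → 𝕜) : v ⬝ᵥ A *ᵥ v = 0 := by
  refine self_eq_neg.mp ?_
  calc v ⬝ᵥ A *ᵥ v = v ⬝ᵥ Aᵀ *ᵥ v := by rw [dotProduct_transpose_mulVec]
    _ = -(v ⬝ᵥ A *ᵥ v) := by rw [hA, neg_mulVec, dotProduct_neg]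

/-- The columns `ρ_a ⊕ θ_a` of `R` and `Tᵀ` frame an isotropic subspace of `V ⊕ V*` of dimension
`dim V`: the fibre of a Dirac structure. Isotropy is antisymmetry of the pairings `⟨θ_a, ρ_b⟩`. -/
structure IsDiracFrame [CommRing 𝕜] (R T : Matrix m m 𝕜) : Prop where
  isotropic : (T * R)ᵀ = -(T * R)
  injective : ∀ v, R *ᵥ v = 0 → Tᵀ *ᵥ v = 0 → v = 0

lemma IsDiracFrame.neg_left [CommRing 𝕜] {R T : Matrix m m 𝕜} (h : IsDiracFrame R T) :
    IsDiracFrame (-R) T where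
  isotropic := by rw [Matrix.mul_neg, transpose_neg, h.isotropic]
  injective v hR := h.injective v (by simpa only [neg_mulVec, neg_eq_zero] using hR)

lemma isDiracFrame_one_right [DecidableEq m] [CommRing 𝕜] {R : Matrix m m 𝕜} (hR : Rᵀ = -R) :
    IsDiracFrame R 1 where
  isotropic := by rw [Matrix.one_mul, hR]
  injective v _ hv := by simpa only [transpose_one, one_mulVec] using hv

lemma IsDiracFrame.isUnit_mul_transpose_add [DecidableEq m] {G K R T : Matrix m m ℝ}
    (h : IsDiracFrame R T) (hG : G.PosDef) (hGK : G * K = 1) : IsUnit (K * Tᵀ + R) := by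
  refine mulVec_injective_iff_isUnit.mp
    ((injective_iff_map_eq_zero (mulVecLin (K * Tᵀ + R))).mpr fun v hv => ?_)
  have hlowered : Tᵀ *ᵥ v + G *ᵥ R *ᵥ v = 0 := by
    have := congrArg (G *ᵥ ·) hv
    simpa only [mulVecLin_apply, add_mulVec, mulVec_add, mulVec_mulVec, ← Matrix.mul_assoc, hGK,
      Matrix.one_mul, mulVec_zero] using this
  -- Isotropy removes the `T`-term from the pairing of `hlowered` with `R v`.
  have hpairing : (R *ᵥ v) ⬝ᵥ Tᵀ *ᵥ v = 0 := by
    rw [dotProduct_transpose_mulVec, mulVec_mulVec]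
    exact dotProduct_mulVec_self_of_transpose_eq_neg h.isotropic v
  have hnorm : (R *ᵥ v) ⬝ᵥ G *ᵥ R *ᵥ v = 0 := by
    simpa only [dotProduct_add, hpairing, zero_add, dotProduct_zero] using
      congrArg ((R *ᵥ v) ⬝ᵥ ·) hlowered
  have hRv : R *ᵥ v = 0 := by
    by_contra hne
    exact (hG.dotProduct_mulVec_pos hne).ne' hnorm
  refine h.injective v hRv ?_
  simpa only [hRv, mulVec_zero, add_zero] using hlowered

lemma IsDiracFrame.isUnit_mul_transpose_sub [DecidableEq m] {G K R T : Matrix m m ℝ}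
    (h : IsDiracFrame R T) (hG : G.PosDef) (hGK : G * K = 1) : IsUnit (K * Tᵀ - R) := by
  rw [sub_eq_add_neg]
  exact h.neg_left.isUnit_mul_transpose_add hG hGK

end Square

/-- The equations defining the gauging coefficients at a fixed gauge and form index, cleared of
the inverses of `M = S + R` and `N = S - R`. The vectors `s, t, f, w` stand for `Γ̂, T, φ, ω`,
while `q, r, h` stand for `∇θ*`, `∇ρ` and the `H`-term. -/
structure GaugingSystem [CommRing 𝕜] (S R : Matrix m ι 𝕜) (q r h : m → 𝕜)
    (s t f w : ι → 𝕜) : Prop where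
  torsion_eq : (S + R) *ᵥ t = q + r - (S + R) *ᵥ s - h
  phi_eq : (S - R) *ᵥ f = r - R *ᵥ s - R *ᵥ t
  omega_eq : w = s - f + t

namespace GaugingSystem

variable [CommRing 𝕜] {S R : Matrix m ι 𝕜} {q r h : m → 𝕜} {s t f w : ι → 𝕜}

lemma of_inverse_formulas [Fintype m] [DecidableEq m] {Minv Ninv : Matrix ι m 𝕜}
    (hM : (S + R) * Minv = 1) (hN : (S - R) * Ninv = 1)
    (ht : t = Minv *ᵥ (q + r - (S + R) *ᵥ s - h)) (hf : f = Ninv *ᵥ (r - R *ᵥ s - R *ᵥ t))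
    (hw : w = s - f + t) : GaugingSystem S R q r h s t f w where
  torsion_eq := by rw [ht, mulVec_mulVec, hM, one_mulVec]
  phi_eq := by rw [hf, mulVec_mulVec, hN, one_mulVec]
  omega_eq := hw

lemma rho_mulVec_omega_add (hsys : GaugingSystem S R q r h s t f w) :
    R *ᵥ w + S *ᵥ f = r := by
  have hf := hsys.phi_eq
  rw [sub_mulVec] at hf
  rw [hsys.omega_eq, mulVec_add, mulVec_sub]
  linear_combination hf

lemma theta_mulVec_omega_add (hsys : GaugingSystem S R q r h s t f w) :
    S *ᵥ w + R *ᵥ f = q - h := by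
  have ht := hsys.torsion_eq
  have hf := hsys.phi_eq
  rw [add_mulVec, add_mulVec] at ht
  rw [sub_mulVec] at hf
  rw [hsys.omega_eq, mulVec_add, mulVec_sub]
  linear_combination ht - hf

end GaugingSystem

lemma lower_smul_raised [Fintype m] [DecidableEq m] [CommRing 𝕜] {G K : Matrix m m 𝕜}
    (hGK : G * K = 1) (r : 𝕜) (c : m → 𝕜) (j : m) :
    ∑ k, G j k * (r * ∑ l, K k l * c l) = r * c j := by
  change (G *ᵥ (r • K *ᵥ c)) j = _
  rw [mulVec_smul, mulVec_mulVec, hGK, one_mulVec, Pi.smul_apply, smul_eq_mul]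

lemma lower_mulVec_add_mulVec [Fintype m] [CommRing 𝕜] {G : Matrix m m 𝕜} {R S : Matrix m ι 𝕜}
    {T : Matrix ι m 𝕜} (hG : G.IsSymm) (hS : G * S = Tᵀ) (w f : ι → 𝕜) (j : m) :
    (G *ᵥ (R *ᵥ w + S *ᵥ f)) j = ∑ b, (w b * ∑ k, R k b * G k j + f b * T b j) := by
  have hR : (G * R)ᵀ = Rᵀ * G := by rw [transpose_mul, hG.eq]
  calc (G *ᵥ (R *ᵥ w + S *ᵥ f)) j = (w ᵥ* (Rᵀ * G) + f ᵥ* T) j := by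
        rw [mulVec_add, mulVec_mulVec, mulVec_mulVec, hS, ← hR, vecMul_transpose, mulVec_transpose]
    _ = ∑ b, (w b * ∑ k, R k b * G k j + f b * T b j) := Finset.sum_add_distrib.symm

end LinearAlgebra

section LeviCivita

open Matrix Filter Topology

variable {n : ℕ} {x : Fin n → ℝ}

lemma pd_congr {f f' : (Fin n → ℝ) → ℝ} (h : f =ᶠ[𝓝 x] f') (i : Fin n) :
    pd f i x = pd f' i x := by
  rw [pd, pd, h.fderiv_eq]

lemma pd_add {f f' : (Fin n → ℝ) → ℝ} (hf : DifferentiableAt ℝ f x)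
    (hf' : DifferentiableAt ℝ f' x) (i : Fin n) :
    pd (fun y => f y + f' y) i x = pd f i x + pd f' i x := by
  rw [pd, fderiv_fun_add hf hf']
  rfl

lemma pd_sum_mul {κ : Type*} [Fintype κ] {f f' : κ → (Fin n → ℝ) → ℝ}
    (hf : ∀ k, DifferentiableAt ℝ (f k) x) (hf' : ∀ k, DifferentiableAt ℝ (f' k) x) (i : Fin n) :
    pd (fun y => ∑ k, f k y * f' k y) i x
      = ∑ k, (f k x * pd (f' k) i x + pd (f k) i x * f' k x) := by
  rw [pd, fderiv_fun_sum fun k _ => (hf k).fun_mul (hf' k), _root_.sum_apply]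
  refine Finset.sum_congr rfl fun k _ => ?_
  rw [fderiv_fun_mul (hf k) (hf' k)]
  simp only [pd, _root_.add_apply, _root_.smul_apply, smul_eq_mul, mul_comm (f' k x)]

/-- `Γ k i l = Γ^k_{il}` are the Christoffel symbols of `g` at `x`, expressed through the symbols of
the first kind so that no inverse metric is needed. -/
def IsLeviCivitaAt (g : (Fin n → ℝ) → Matrix (Fin n) (Fin n) ℝ)
    (Γ : Fin n → Fin n → Fin n → ℝ) (x : Fin n → ℝ) : Prop :=
  ∀ i j l, ∑ k, g x j k * Γ k i l = (1 / 2) *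
    (pd (fun y => g y j l) i x + pd (fun y => g y j i) l x - pd (fun y => g y i l) j x)

/-- The components `∇_i v^k` of the covariant derivative of the vector field `v`, for the connection
with coefficients `Γ` at `x`. -/
noncomputable def covDeriv (Γ : Fin n → Fin n → Fin n → ℝ) (v : (Fin n → ℝ) → Fin n → ℝ)
    (i : Fin n) (x : Fin n → ℝ) : Fin n → ℝ :=
  fun k => pd (fun y => v y k) i x + ∑ l, Γ k i l * v x l

variable {g : (Fin n → ℝ) → Matrix (Fin n) (Fin n) ℝ} {Γ : Fin n → Fin n → Fin n → ℝ}
  {u v : (Fin n → ℝ) → Fin n → ℝ}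

lemma covDeriv_add (hu : ∀ k, DifferentiableAt ℝ (fun y => u y k) x)
    (hv : ∀ k, DifferentiableAt ℝ (fun y => v y k) x) (i : Fin n) :
    covDeriv Γ (fun y => u y + v y) i x = covDeriv Γ u i x + covDeriv Γ v i x := by
  funext k
  simp only [covDeriv, Pi.add_apply, pd_add (hu k) (hv k), mul_add, Finset.sum_add_distrib]
  ring

lemma isLeviCivitaAt_of_christoffel {K : Matrix (Fin n) (Fin n) ℝ} (hgK : g x * K = 1)
    (hΓ : ∀ i j k, Γ i j k = (1 / 2) * ∑ l, K i l *
      (pd (fun y => g y l k) j x + pd (fun y => g y l j) k x - pd (fun y => g y j k) l x)) :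
    IsLeviCivitaAt g Γ x := by
  intro i j l
  simp only [hΓ]
  exact lower_smul_raised hgK (1 / 2)
    (fun p => pd (fun y => g y p l) i x + pd (fun y => g y p i) l x - pd (fun y => g y i l) p x) j

lemma IsLeviCivitaAt.lower_covDeriv (hΓ : IsLeviCivitaAt g Γ x) (i j : Fin n) :
    (g x *ᵥ covDeriv Γ v i x) j = ∑ k, (g x j k * pd (fun y => v y k) i x + (1 / 2) *
      (pd (fun y => g y j k) i x + pd (fun y => g y j i) k x - pd (fun y => g y i k) j x) *
        v x k) := by
  have hswap : ∑ k, g x j k * ∑ l, Γ k i l * v x l = ∑ l, (∑ k, g x j k * Γ k i l) * v x l := by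
    simp only [Finset.mul_sum, Finset.sum_mul, mul_assoc]
    exact Finset.sum_comm
  calc (g x *ᵥ covDeriv Γ v i x) j
      = ∑ k, g x j k * pd (fun y => v y k) i x + ∑ k, g x j k * ∑ l, Γ k i l * v x l := by
        simp only [mulVec, dotProduct, covDeriv, mul_add, Finset.sum_add_distrib]
    _ = _ := by simp only [hswap, hΓ i j, Finset.sum_add_distrib]

/-- `∇_i v_j + ∇_j v_i = (L_v g)_{ij}`. -/
lemma IsLeviCivitaAt.lower_covDeriv_add_swap (hΓ : IsLeviCivitaAt g Γ x)
    (hg : ∀ᶠ y in 𝓝 x, (g y).IsSymm) (i j : Fin n) :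
    (g x *ᵥ covDeriv Γ v i x) j + (g x *ᵥ covDeriv Γ v j x) i
      = ∑ k, (v x k * pd (fun y => g y i j) k x + g x k j * pd (fun y => v y k) i x
          + g x i k * pd (fun y => v y k) j x) := by
  rw [hΓ.lower_covDeriv, hΓ.lower_covDeriv, ← Finset.sum_add_distrib]
  refine Finset.sum_congr rfl fun k _ => ?_
  rw [pd_congr (hg.mono fun y hy => hy.apply i j) k, hg.self_of_nhds.apply j k]
  ring

/-- `∇_i v_j - ∇_j v_i = (dv♭)_{ij}`. -/
lemma IsLeviCivitaAt.lower_covDeriv_sub_swap (hΓ : IsLeviCivitaAt g Γ x)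
    (hg : ∀ᶠ y in 𝓝 x, (g y).IsSymm) (hgd : ∀ i j, DifferentiableAt ℝ (fun y => g y i j) x)
    (hv : ∀ k, DifferentiableAt ℝ (fun y => v y k) x) (i j : Fin n) :
    (g x *ᵥ covDeriv Γ v i x) j - (g x *ᵥ covDeriv Γ v j x) i
      = pd (fun y => (g y *ᵥ v y) j) i x - pd (fun y => (g y *ᵥ v y) i) j x := by
  simp only [mulVec, dotProduct, pd_sum_mul (hgd _) hv]
  rw [← dotProduct, ← dotProduct, ← mulVec, ← mulVec, hΓ.lower_covDeriv, hΓ.lower_covDeriv,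
    ← Finset.sum_sub_distrib, ← Finset.sum_sub_distrib]
  refine Finset.sum_congr rfl fun k _ => ?_
  rw [pd_congr (hg.mono fun y hy => hy.apply i j) k]
  ring

end LeviCivita

section Gauging

open Matrix Filter Topology

variable {n : ℕ} {ι : Type*} [Fintype ι] {x : Fin n → ℝ}

/-- The vector `½ v^l g^{km} H_{mli}` by which the connection in the formula for `T` differs from
the Levi-Civita one; `K` is the inverse metric. -/
noncomputable def fluxTerm (K : Matrix (Fin n) (Fin n) ℝ) (H : Fin n → Fin n → Fin n → ℝ)
    (v : Fin n → ℝ) (i : Fin n) : Fin n → ℝ :=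
  fun k => (1 / 2) * ∑ l, ∑ m, v l * K k m * H m l i

lemma lower_fluxTerm {G K : Matrix (Fin n) (Fin n) ℝ} (hGK : G * K = 1)
    (H : Fin n → Fin n → Fin n → ℝ) (v : Fin n → ℝ) (i j : Fin n) :
    (G *ᵥ fluxTerm K H v i) j = (1 / 2) * ∑ l, v l * H j l i := by
  have hflux : ∀ k, fluxTerm K H v i k = (1 / 2) * ∑ m, K k m * ∑ l, v l * H m l i := by
    intro k
    rw [fluxTerm, Finset.sum_comm]
    simp only [Finset.mul_sum, mul_assoc, mul_left_comm (K k _)]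
  simp only [mulVec, dotProduct, hflux]
  exact lower_smul_raised hGK (1 / 2) (fun m => ∑ l, v l * H m l i) j

lemma lower_fluxTerm_sub_swap {G K : Matrix (Fin n) (Fin n) ℝ} (hGK : G * K = 1)
    {H : Fin n → Fin n → Fin n → ℝ} (hH_swap₁₂ : ∀ i j k, H i j k = -H j i k)
    (hH_swap₂₃ : ∀ i j k, H i j k = -H i k j) (v : Fin n → ℝ) (i j : Fin n) :
    (G *ᵥ fluxTerm K H v i) j - (G *ᵥ fluxTerm K H v j) i = ∑ k, v k * H k i j := by
  rw [lower_fluxTerm hGK, lower_fluxTerm hGK, Finset.mul_sum, Finset.mul_sum,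
    ← Finset.sum_sub_distrib]
  refine Finset.sum_congr rfl fun k _ => ?_
  rw [hH_swap₁₂ j k i, hH_swap₂₃ k j i, hH_swap₁₂ i k j]
  ring

variable {g : (Fin n → ℝ) → Matrix (Fin n) (Fin n) ℝ} {Γ : Fin n → Fin n → Fin n → ℝ}
  {S ρ : (Fin n → ℝ) → Matrix (Fin n) ι ℝ} {θ : (Fin n → ℝ) → Matrix ι (Fin n) ℝ}

lemma gaugingSystem_of_coefficients {K : Matrix (Fin n) (Fin n) ℝ}
    {H : Fin n → Fin n → Fin n → ℝ} {M N : (Fin n → ℝ) → Matrix (Fin n) ι ℝ}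
    {Minv Ninv : Matrix ι (Fin n) ℝ} {s t f w : ι → ℝ} {a : ι} {i : Fin n}
    (hSd : ∀ k, DifferentiableAt ℝ (fun y => S y k a) x)
    (hρd : ∀ k, DifferentiableAt ℝ (fun y => ρ y k a) x)
    (hM : ∀ y, M y = S y + ρ y) (hN : ∀ y, N y = S y - ρ y)
    (hMinv : M x * Minv = 1) (hNinv : N x * Ninv = 1)
    (ht : ∀ c, t c = ∑ k, Minv c k *
      (pd (fun y => M y k a) i x + (∑ l, Γ k i l * M x l a) - (∑ d, s d * M x k d)
        - (1 / 2) * ∑ l, ∑ m, ρ x l a * K k m * H m l i))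
    (hf : ∀ c, f c = ∑ k, Ninv c k *
      (pd (fun y => ρ y k a) i x + (∑ l, Γ k i l * ρ x l a) - (∑ d, s d * ρ x k d)
        - ∑ d, ρ x k d * t d))
    (hw : ∀ c, w c = s c - f c + t c) :
    GaugingSystem (S x) (ρ x) (covDeriv Γ (fun y k => S y k a) i x)
      (covDeriv Γ (fun y k => ρ y k a) i x) (fluxTerm K H (fun k => ρ x k a) i) s t f w := by
  obtain rfl : M = fun y => S y + ρ y := funext hM
  obtain rfl : N = fun y => S y - ρ y := funext hN
  have hcomm : ∀ (A : Matrix (Fin n) ι ℝ) k, ∑ d, s d * A k d = (A *ᵥ s) k := fun A k =>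
    dotProduct_comm s (A k)
  simp only [hcomm] at ht hf
  refine .of_inverse_formulas hMinv hNinv ?_ (funext hf) (funext hw)
  rw [← covDeriv_add hSd hρd]
  exact funext ht

lemma lieDeriv_metric_eq_of_rho_mulVec {Sx : Matrix (Fin n) ι ℝ} {ω φ : ι → Fin n → ℝ}
    {a : ι} (hg : ∀ᶠ y in 𝓝 x, (g y).IsSymm) (hΓ : IsLeviCivitaAt g Γ x) (hS : g x * Sx = (θ x)ᵀ)
    (hsol : ∀ i, ρ x *ᵥ (ω · i) + Sx *ᵥ (φ · i) = covDeriv Γ (fun y k => ρ y k a) i x)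
    (i j : Fin n) :
    ∑ k, (ρ x k a * pd (fun y => g y i j) k x + g x k j * pd (fun y => ρ y k a) i x
        + g x i k * pd (fun y => ρ y k a) j x)
      = ∑ b, (ω b i * (∑ k, ρ x k b * g x k j) + ω b j * (∑ k, ρ x k b * g x k i)
        + φ b i * θ x b j + φ b j * θ x b i) := by
  rw [← hΓ.lower_covDeriv_add_swap (v := fun y k => ρ y k a) hg, ← hsol, ← hsol,
    lower_mulVec_add_mulVec hg.self_of_nhds hS, lower_mulVec_add_mulVec hg.self_of_nhds hS,
    ← Finset.sum_add_distrib]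
  exact Finset.sum_congr rfl fun b _ => by ring

lemma flux_eq_of_theta_mulVec {K : Matrix (Fin n) (Fin n) ℝ} {H : Fin n → Fin n → Fin n → ℝ}
    {ω φ : ι → Fin n → ℝ} {a : ι}
    (hg : ∀ᶠ y in 𝓝 x, (g y).IsSymm) (hgd : ∀ i j, DifferentiableAt ℝ (fun y => g y i j) x)
    (hSd : ∀ k, DifferentiableAt ℝ (fun y => S y k a) x) (hgK : g x * K = 1)
    (hΓ : IsLeviCivitaAt g Γ x) (hS : ∀ᶠ y in 𝓝 x, g y * S y = (θ y)ᵀ)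
    (hH_swap₁₂ : ∀ i j k, H i j k = -H j i k) (hH_swap₂₃ : ∀ i j k, H i j k = -H i k j)
    (hsol : ∀ i, S x *ᵥ (ω · i) + ρ x *ᵥ (φ · i)
      = covDeriv Γ (fun y k => S y k a) i x - fluxTerm K H (fun k => ρ x k a) i)
    (i j : Fin n) :
    ∑ k, ρ x k a * H k i j
      = pd (fun y => θ y a j) i x - pd (fun y => θ y a i) j x
        - (∑ b, (ω b i * θ x b j - ω b j * θ x b i))
        - ∑ b, ∑ k, (φ b i * ρ x k b * g x k j - φ b j * ρ x k b * g x k i) := by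
  have hdθ : ∀ i j, pd (fun y => θ y a j) i x = pd (fun y => (g y *ᵥ fun k => S y k a) j) i x :=
    fun i j => pd_congr (hS.mono fun y hy => (congrFun (congrFun hy j) a).symm) i
  have hlower : ∀ i j, (g x *ᵥ covDeriv Γ (fun y k => S y k a) i x) j
      - (g x *ᵥ fluxTerm K H (fun k => ρ x k a) i) j
      = ∑ b, (φ b i * ∑ k, ρ x k b * g x k j + ω b i * θ x b j) := by
    intro i j
    rw [← Pi.sub_apply, ← mulVec_sub, ← hsol, add_comm,
      lower_mulVec_add_mulVec hg.self_of_nhds hS.self_of_nhds]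
  have hsum : (∑ b, (ω b i * θ x b j - ω b j * θ x b i))
      + ∑ b, ∑ k, (φ b i * ρ x k b * g x k j - φ b j * ρ x k b * g x k i)
      = ∑ b, (φ b i * ∑ k, ρ x k b * g x k j + ω b i * θ x b j)
        - ∑ b, (φ b j * ∑ k, ρ x k b * g x k i + ω b j * θ x b i) := by
    simp only [Finset.sum_sub_distrib, Finset.sum_add_distrib, Finset.mul_sum, mul_assoc]
    ring
  rw [hdθ, hdθ, ← hΓ.lower_covDeriv_sub_swap hg hgd hSd,
    ← lower_fluxTerm_sub_swap hgK hH_swap₁₂ hH_swap₂₃, sub_sub _ (∑ b, _), hsum, ← hlower, ← hlower]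
  ring

end Gauging

section General

open Matrix Filter Topology

/-- The gauging of an arbitrary Dirac sigma model. The Wess–Zumino Poisson sigma model is the case
in which the Dirac structure is the graph of the bivector `π`. -/
theorem wz_poisson_sigma_model_gauging_general {n : ℕ} {U : Set (Fin n → ℝ)} (hU : IsOpen U)
    {g ginv : (Fin n → ℝ) → Matrix (Fin n) (Fin n) ℝ}
    (hg : ∀ i j, DifferentiableOn ℝ (fun x => g x i j) U)
    (hginv : ∀ i j, DifferentiableOn ℝ (fun x => ginv x i j) U)
    (hg_posDef : ∀ x ∈ U, (g x).PosDef) (hg_mul : ∀ x ∈ U, g x * ginv x = 1)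
    {Γ : (Fin n → ℝ) → Fin n → Fin n → Fin n → ℝ} (hΓ : ∀ x ∈ U, IsLeviCivitaAt g (Γ x) x)
    {H : (Fin n → ℝ) → Fin n → Fin n → Fin n → ℝ}
    (hH_swap₁₂ : ∀ x ∈ U, ∀ i j k, H x i j k = -H x j i k)
    (hH_swap₂₃ : ∀ x ∈ U, ∀ i j k, H x i j k = -H x i k j)
    {ρ θ : (Fin n → ℝ) → Matrix (Fin n) (Fin n) ℝ}
    (hρ : ∀ i a, DifferentiableOn ℝ (fun x => ρ x i a) U)
    (hθ : ∀ a i, DifferentiableOn ℝ (fun x => θ x a i) U)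
    (hDirac : ∀ x ∈ U, IsDiracFrame (ρ x) (θ x))
    {M N : (Fin n → ℝ) → Matrix (Fin n) (Fin n) ℝ}
    (hM : ∀ x, M x = ginv x * (θ x)ᵀ + ρ x) (hN : ∀ x, N x = ginv x * (θ x)ᵀ - ρ x) :
    (∀ x ∈ U, IsUnit (M x)) ∧ (∀ x ∈ U, IsUnit (N x)) ∧
    ∀ (Minv Ninv : (Fin n → ℝ) → Matrix (Fin n) (Fin n) ℝ)
      (Γhat T φ ω : (Fin n → ℝ) → Fin n → Fin n → Fin n → ℝ),
      (∀ x ∈ U, M x * Minv x = 1) → (∀ x ∈ U, N x * Ninv x = 1) →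
      (∀ x ∈ U, ∀ a b i, T x a b i = ∑ k, Minv x a k *
        (pd (fun y => M y k b) i x + (∑ l, Γ x k i l * M x l b)
          - (∑ c, Γhat x c b i * M x k c)
          - (1 / 2) * ∑ l, ∑ m, ρ x l b * ginv x k m * H x m l i)) →
      (∀ x ∈ U, ∀ a b i, φ x a b i = ∑ k, Ninv x a k *
        (pd (fun y => ρ y k b) i x + (∑ l, Γ x k i l * ρ x l b)
          - (∑ c, Γhat x c b i * ρ x k c) - ∑ c, ρ x k c * T x c b i)) →
      (∀ x ∈ U, ∀ a b i, ω x a b i = Γhat x a b i - φ x a b i + T x a b i) →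
      ∀ x ∈ U, ∀ a i j,
        ((∑ k, (ρ x k a * pd (fun y => g y i j) k x
              + g x k j * pd (fun y => ρ y k a) i x
              + g x i k * pd (fun y => ρ y k a) j x))
          = ∑ b, (ω x b a i * (∑ k, ρ x k b * g x k j)
              + ω x b a j * (∑ k, ρ x k b * g x k i)
              + φ x b a i * θ x b j + φ x b a j * θ x b i))
        ∧ ((∑ k, ρ x k a * H x k i j)
          = pd (fun y => θ y a j) i x - pd (fun y => θ y a i) j x
            - (∑ b, (ω x b a i * θ x b j - ω x b a j * θ x b i))
            - ∑ b, ∑ k, (φ x b a i * ρ x k b * g x k j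
                - φ x b a j * ρ x k b * g x k i)) := by
  refine ⟨fun x hx => ?_, fun x hx => ?_, ?_⟩
  · rw [hM]
    exact (hDirac x hx).isUnit_mul_transpose_add (hg_posDef x hx) (hg_mul x hx)
  · rw [hN]
    exact (hDirac x hx).isUnit_mul_transpose_sub (hg_posDef x hx) (hg_mul x hx)
  intro Minv Ninv Γhat T φ ω hMinv hNinv hT hφ hω x hx a
  have hdiff : ∀ {f : (Fin n → ℝ) → ℝ}, DifferentiableOn ℝ f U → DifferentiableAt ℝ f x :=
    fun hf => hf.differentiableAt (hU.mem_nhds hx)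
  have hSd : ∀ k, DifferentiableAt ℝ (fun y => (ginv y * (θ y)ᵀ) k a) x := fun k => by
    simp only [mul_apply, transpose_apply]
    exact .fun_sum fun l _ => (hdiff (hginv k l)).fun_mul (hdiff (hθ a l))
  have hlower : ∀ y ∈ U, g y * (ginv y * (θ y)ᵀ) = (θ y)ᵀ := fun y hy => by
    rw [← Matrix.mul_assoc, hg_mul y hy, Matrix.one_mul]
  have hsymm : ∀ᶠ y in 𝓝 x, (g y).IsSymm :=
    eventually_of_mem (hU.mem_nhds hx) fun y hy => (hg_posDef y hy).isHermitian
  have hsys := fun i => gaugingSystem_of_coefficients (Γ := Γ x) hSd (fun k => hdiff (hρ k a))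
    hM hN (hMinv x hx) (hNinv x hx) (hT x hx · a i) (hφ x hx · a i) (hω x hx · a i)
  exact fun i j => ⟨lieDeriv_metric_eq_of_rho_mulVec hsymm (hΓ x hx) (hlower x hx)
      (fun i => (hsys i).rho_mulVec_omega_add) i j,
    flux_eq_of_theta_mulVec hsymm (fun i j => hdiff (hg i j)) hSd (hg_mul x hx) (hΓ x hx)
      (eventually_of_mem (hU.mem_nhds hx) hlower) (hH_swap₁₂ x hx) (hH_swap₂₃ x hx)
      (fun i => (hsys i).theta_mulVec_omega_add) i j⟩

end General

/-- **Gauging of the Wess–Zumino Poisson sigma model with kinetic term.**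
Specializing the general data to `ρ^i_a := π^{ai}` and `θ_{ai} := δ_{ai}`, one has
`θ*^k_b = g^{kb}`, the matrices `M = (g^{kb} − π^{kb})` and `N = (g^{kb} + π^{kb})` are
invertible at every point of `U`, and with `T`, `φ`, `ω` defined by the general formulas
(for any choice of smooth auxiliary connection coefficients `Γ̂`), both gauge-invariance
conditions hold at every point of `U`. -/
theorem wz_poisson_sigma_model_gauging {n : ℕ}
    (U : Set (Fin n → ℝ)) (hU : IsOpen U)
    (g ginv : (Fin n → ℝ) → Fin n → Fin n → ℝ)
    (hg_smooth : ∀ i j, ContDiffOn ℝ (⊤ : ℕ∞) (fun x => g x i j) U)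
    (hginv_smooth : ∀ i j, ContDiffOn ℝ (⊤ : ℕ∞) (fun x => ginv x i j) U)
    (hg_symm : ∀ x ∈ U, ∀ i j, g x i j = g x j i)
    (hg_posdef : ∀ x ∈ U, ∀ v : Fin n → ℝ, v ≠ 0 → 0 < ∑ i, ∑ j, v i * g x i j * v j)
    (hginv : ∀ x ∈ U, ∀ i j, (∑ k, g x i k * ginv x k j) = if i = j then (1 : ℝ) else 0)
    (Γ : (Fin n → ℝ) → Fin n → Fin n → Fin n → ℝ)
    (hΓ : ∀ x ∈ U, ∀ i j k, Γ x i j k =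
      (1 / 2) * ∑ l, ginv x i l *
        (pd (fun y => g y l k) j x + pd (fun y => g y l j) k x - pd (fun y => g y j k) l x))
    (H : (Fin n → ℝ) → Fin n → Fin n → Fin n → ℝ)
    (hH_smooth : ∀ i j k, ContDiffOn ℝ (⊤ : ℕ∞) (fun x => H x i j k) U)
    (hH_anti₁ : ∀ x ∈ U, ∀ i j k, H x i j k = - H x j i k)
    (hH_anti₂ : ∀ x ∈ U, ∀ i j k, H x i j k = - H x i k j)
    (π : (Fin n → ℝ) → Fin n → Fin n → ℝ)
    (hπ_smooth : ∀ i j, ContDiffOn ℝ (⊤ : ℕ∞) (fun x => π x i j) U)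
    (hπ_anti : ∀ x ∈ U, ∀ i j, π x i j = - π x j i)
    (ρ θ : (Fin n → ℝ) → Fin n → Fin n → ℝ)
    (hρ : ∀ (x : Fin n → ℝ) (i a : Fin n), ρ x i a = π x a i)
    (hθ : ∀ (x : Fin n → ℝ) (a i : Fin n), θ x a i = if a = i then (1 : ℝ) else 0)
    (M N : (Fin n → ℝ) → Fin n → Fin n → ℝ)
    (hM : ∀ (x : Fin n → ℝ) (k b : Fin n), M x k b = (∑ l, ginv x k l * θ x b l) + ρ x k b)
    (hN : ∀ (x : Fin n → ℝ) (k b : Fin n), N x k b = (∑ l, ginv x k l * θ x b l) - ρ x k b) :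
    -- θ*^k_b = g^{kb}
    (∀ x ∈ U, ∀ k b, (∑ l, ginv x k l * θ x b l) = ginv x k b)
    -- M = g^{kb} − π^{kb} and N = g^{kb} + π^{kb}
    ∧ (∀ x ∈ U, ∀ k b, M x k b = ginv x k b - π x k b ∧ N x k b = ginv x k b + π x k b)
    -- M is invertible at every point of U
    ∧ (∀ x ∈ U, ∃ P : Matrix (Fin n) (Fin n) ℝ,
        (Matrix.of fun k b => M x k b) * P = 1 ∧ P * (Matrix.of fun k b => M x k b) = 1)
    -- N is invertible at every point of U
    ∧ (∀ x ∈ U, ∃ P : Matrix (Fin n) (Fin n) ℝ,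
        (Matrix.of fun k b => N x k b) * P = 1 ∧ P * (Matrix.of fun k b => N x k b) = 1)
    -- both gauge-invariance conditions hold for T, φ, ω given by the general formulas
    ∧ (∀ Minv Ninv : (Fin n → ℝ) → Fin n → Fin n → ℝ,
        ∀ Γhat T φ ω : (Fin n → ℝ) → Fin n → Fin n → Fin n → ℝ,
        (∀ x ∈ U, ∀ a b, (∑ k, Minv x a k * M x k b) = if a = b then (1 : ℝ) else 0) →
        (∀ x ∈ U, ∀ a b, (∑ k, M x a k * Minv x k b) = if a = b then (1 : ℝ) else 0) →
        (∀ x ∈ U, ∀ a b, (∑ k, Ninv x a k * N x k b) = if a = b then (1 : ℝ) else 0) →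
        (∀ x ∈ U, ∀ a b, (∑ k, N x a k * Ninv x k b) = if a = b then (1 : ℝ) else 0) →
        (∀ a b i, ContDiffOn ℝ (⊤ : ℕ∞) (fun x => Γhat x a b i) U) →
        (∀ x ∈ U, ∀ a b i, T x a b i = ∑ k, Minv x a k *
          (pd (fun y => M y k b) i x + (∑ l, Γ x k i l * M x l b)
            - (∑ c, Γhat x c b i * M x k c)
            - (1 / 2) * ∑ l, ∑ m, ρ x l b * ginv x k m * H x m l i)) →
        (∀ x ∈ U, ∀ a b i, φ x a b i = ∑ k, Ninv x a k *
          (pd (fun y => ρ y k b) i x + (∑ l, Γ x k i l * ρ x l b)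
            - (∑ c, Γhat x c b i * ρ x k c) - ∑ c, ρ x k c * T x c b i)) →
        (∀ x ∈ U, ∀ a b i, ω x a b i = Γhat x a b i - φ x a b i + T x a b i) →
        ∀ x ∈ U, ∀ a i j,
          ((∑ k, (ρ x k a * pd (fun y => g y i j) k x
                + g x k j * pd (fun y => ρ y k a) i x
                + g x i k * pd (fun y => ρ y k a) j x))
            = ∑ b, (ω x b a i * (∑ k, ρ x k b * g x k j)
                + ω x b a j * (∑ k, ρ x k b * g x k i)
                + φ x b a i * θ x b j + φ x b a j * θ x b i))
          ∧ ((∑ k, ρ x k a * H x k i j)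
            = pd (fun y => θ y a j) i x - pd (fun y => θ y a i) j x
              - (∑ b, (ω x b a i * θ x b j - ω x b a j * θ x b i))
              - ∑ b, ∑ k, (φ x b a i * ρ x k b * g x k j
                  - φ x b a j * ρ x k b * g x k i))) := by
  have hstar : ∀ x k b, (∑ l, ginv x k l * θ x b l) = ginv x k b := fun x k b => by
    simp [hθ]
  have hρ_eq : ∀ x ∈ U, ∀ k b, ρ x k b = -π x k b := fun x hx k b => by rw [hρ, hπ_anti x hx]
  have hDirac : ∀ x ∈ U, IsDiracFrame (Matrix.of (ρ x)) (Matrix.of (θ x)) := fun x hx => by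
    rw [show Matrix.of (θ x) = 1 from Matrix.ext (hθ x)]
    exact isDiracFrame_one_right (Matrix.ext fun i a => by simp [hρ, hπ_anti x hx i a])
  have hdiff {f : (Fin n → ℝ) → ℝ} (hf : ContDiffOn ℝ (⊤ : ℕ∞) f U) : DifferentiableOn ℝ f U :=
    hf.differentiableOn (by simp)
  have hρ_diff : ∀ i a, DifferentiableOn ℝ (fun x => ρ x i a) U := fun i a => by
    simpa only [hρ] using hdiff (hπ_smooth a i)
  have hθ_diff : ∀ a i, DifferentiableOn ℝ (fun x => θ x a i) U := fun a i => by simp [hθ]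
  have hgK := fun x hx => matrix_of_mul_of_eq_one (hginv x hx)
  obtain ⟨hMunit, hNunit, hgauge⟩ := wz_poisson_sigma_model_gauging_general hU
    (fun i j => hdiff (hg_smooth i j)) (fun i j => hdiff (hginv_smooth i j))
    (fun x hx => posDef_of_sum_pos (hg_symm x hx) (hg_posdef x hx)) hgK
    (fun x hx => isLeviCivitaAt_of_christoffel (hgK x hx) (hΓ x hx)) hH_anti₁ hH_anti₂
    hρ_diff hθ_diff hDirac (fun x => Matrix.ext (hM x)) (fun x => Matrix.ext (hN x))
  refine ⟨fun x _ => hstar x, fun x hx k b => ?_,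
    fun x hx => isUnit_iff_exists.mp (hMunit x hx), fun x hx => isUnit_iff_exists.mp (hNunit x hx),
    fun Minv Ninv Γhat T φ ω _ hMinv _ hNinv _ => hgauge Minv Ninv Γhat T φ ω
      (fun x hx => matrix_of_mul_of_eq_one (hMinv x hx))
      (fun x hx => matrix_of_mul_of_eq_one (hNinv x hx))⟩
  rw [hM, hN, hstar, hρ_eq x hx]
  exact ⟨(sub_eq_add_neg _ _).symm, sub_neg_eq_add _ _⟩
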